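/- Let (X, W) be a strong left Frobenius pair in A. Then (W, X̂) is a cotorsion pair on the extension-closed subcategory Thick(X) = X̂ of A: Ext^1(W, Z) = 0 for all W ∈ W, Z ∈ X̂, and every C ∈ X̂ admits short exact sequences 0 → Z → W → C → 0 and 0 → C → Z' → W' → 0 with W, W' ∈ W and Z, Z' ∈ X̂. -/

import Mathlib

/-!
The pair `(W, X̂)` is a cotorsion pair on `X̂` because of one fact: every `M ∈ X̂ₙ₊₁` is a quotient
of an object of `W` with kernel in `X̂ₙ` (`exists_res`). It is obtained from a resolution
`0 → K → E → M → 0` by covering `E` with an object of `W` and pulling back. The coresolution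
required of a cotorsion pair is trivial, `0 → M → M → 0 → 0`, and `Ext¹(W, X̂) = 0` follows by
dimension shifting (`ext_hat`).

For `Thick(X) = X̂` it has to be shown that `X̂` is thick. Extensions (`hat_ext`), by induction
on `n`: given `0 → A → B → D → 0` with `A, D ∈ X̂ₙ₊₁`, cover `D` by `W₀ ∈ W` with kernel
`D' ∈ X̂ₙ`. The pullback `P` of `B` and `W₀` over `D` is a split extension of `W₀` by `A`, as
`Ext¹(W₀, A) = 0`, so a cover `E` of `A` with kernel `A' ∈ X̂ₙ` gives a cover `E ⊞ W₀` of `P` with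
the same kernel. The kernel of `E ⊞ W₀ → P → B` is an extension of `D'` by `A'`, which lies in
`X̂ₙ` by induction. Closure under cokernels of monomorphisms and kernels of epimorphisms then
follows by pulling back. For summands (`hat_summand`), if `A` is a retract of `M ∈ X̂ₙ₊₁` and
`W₀ → M` is a cover, then the kernel of `W₀ → A` is a retract of the kernel of a suitable
epimorphism `W₀ ⊞ W₀ → M`, which is in `X̂ₙ` (`hat_syzygy`), and induction on `n` applies.
-/


open CategoryTheory CategoryTheory.Limits CategoryTheory.Abelian ZeroObject

universe w v u

namespace FrobeniusPaper

variable {C : Type u} [Category.{v} C] [Abelian C]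

/-- `f, g` form a short exact sequence `0 → A → B → D → 0` in the abelian category `C`. -/
def IsSES {A B D : C} (f : A ⟶ B) (g : B ⟶ D) : Prop :=
  ∃ w : f ≫ g = 0, (ShortComplex.mk f g w).ShortExact

/-- A "subcategory" in the sense of the paper: a full additive subcategory, regarded as the
predicate of membership for its objects, closed under isomorphisms and direct summands. -/
structure IsSubcat (X : C → Prop) : Prop where
  zero : X 0
  iso_closed : ∀ {A B : C}, (A ≅ B) → X A → X B
  biprod_closed : ∀ {A B : C}, X A → X B → X (A ⊞ B)
  summand_closed : ∀ {A M : C} (i : A ⟶ M) (p : M ⟶ A), i ≫ p = 𝟙 A → X M → X A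

/-- `Hat X n M` means `M ∈ X̂ₙ`, i.e. there is an exact sequence
`0 → Xₙ → ⋯ → X₁ → X₀ → M → 0` with all `Xᵢ ∈ X`. -/
def Hat (X : C → Prop) : ℕ → C → Prop
  | 0, M => X M
  | (n + 1), M => ∃ (K E : C) (f : K ⟶ E) (g : E ⟶ M), IsSES f g ∧ X E ∧ Hat X n K

/-- `M ∈ X̂ = ⋃ₙ X̂ₙ`. -/
def HatAll (X : C → Prop) (M : C) : Prop := ∃ n, Hat X n M

/-- `W` is a cogenerator for `X`. -/
def IsCogenerator (W X : C → Prop) : Prop :=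
  (∀ M, W M → X M) ∧
    ∀ M, X M → ∃ (W₀ X' : C) (f : M ⟶ W₀) (g : W₀ ⟶ X'), IsSES f g ∧ W W₀ ∧ X X'

/-- `W` is a generator for `X`. -/
def IsGenerator (W X : C → Prop) : Prop :=
  (∀ M, W M → X M) ∧
    ∀ M, X M → ∃ (X' W₀ : C) (f : X' ⟶ W₀) (g : W₀ ⟶ M), IsSES f g ∧ W W₀ ∧ X X'

/-- `X` is closed under extensions. -/
def ExtClosed (X : C → Prop) : Prop :=
  ∀ ⦃A B D : C⦄ (f : A ⟶ B) (g : B ⟶ D), IsSES f g → X A → X D → X B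

/-- `X` is closed under kernels of epimorphisms. -/
def KerEpiClosed (X : C → Prop) : Prop :=
  ∀ ⦃A B D : C⦄ (f : A ⟶ B) (g : B ⟶ D), IsSES f g → X B → X D → X A

/-- A thick subcategory: closed under direct summands and two-out-of-three for
short exact sequences. -/
def IsThickSub (T : C → Prop) : Prop :=
  IsSubcat T ∧ ∀ ⦃A B D : C⦄ (f : A ⟶ B) (g : B ⟶ D), IsSES f g →
    (T A → T B → T D) ∧ (T A → T D → T B) ∧ (T B → T D → T A)

/-- Membership in `Thick(X)`, the smallest thick subcategory containing `X`. -/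
def thickClosure (X : C → Prop) (M : C) : Prop :=
  ∀ T : C → Prop, IsThickSub T → (∀ N, X N → T N) → T M

variable [HasExt.{w} C]

/-- `Y ∈ X^⊥`, i.e. `Extⁱ(M, Y) = 0` for all `i ≥ 1` and `M ∈ X`. -/
def rightPerp (X : C → Prop) (Y : C) : Prop :=
  ∀ M, X M → ∀ i : ℕ, 1 ≤ i → Subsingleton (Abelian.Ext M Y i)

/-- A left Frobenius pair `(X, W)`. -/
structure LeftFrobenius (X W : C → Prop) : Prop where
  subX : IsSubcat X
  subW : IsSubcat W
  extClosed : ExtClosed X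
  kerEpiClosed : KerEpiClosed X
  cogen : IsCogenerator W X
  perp : ∀ M, W M → rightPerp X M

/-- A strong left Frobenius pair `(X, W)`. -/
structure StrongLeftFrobenius (X W : C → Prop) extends LeftFrobenius X W : Prop where
  gen : IsGenerator W X
  proj : ∀ M N, W M → X N → ∀ i : ℕ, 1 ≤ i → Subsingleton (Abelian.Ext M N i)

/-- A cotorsion pair `(U, V)` on an extension-closed subcategory `B` of `C`. -/
structure CotorsionPairOn (B U V : C → Prop) : Prop where
  subU : ∀ M, U M → B M
  subV : ∀ M, V M → B M
  isoU : ∀ {A B' : C}, (A ≅ B') → U A → U B'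
  summandU : ∀ {A M : C} (i : A ⟶ M) (p : M ⟶ A), i ≫ p = 𝟙 A → U M → U A
  isoV : ∀ {A B' : C}, (A ≅ B') → V A → V B'
  summandV : ∀ {A M : C} (i : A ⟶ M) (p : M ⟶ A), i ≫ p = 𝟙 A → V M → V A
  ext1 : ∀ M N, U M → V N → Subsingleton (Abelian.Ext M N 1)
  res : ∀ M, B M → ∃ (V₀ U₀ : C) (f : V₀ ⟶ U₀) (g : U₀ ⟶ M), IsSES f g ∧ U U₀ ∧ V V₀
  cores : ∀ M, B M → ∃ (V₀ U₀ : C) (f : M ⟶ V₀) (g : V₀ ⟶ U₀), IsSES f g ∧ U U₀ ∧ V V₀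

set_option linter.unusedSectionVars false

/-! ### Short exact sequences and pullbacks -/

section SES

lemma IsSES.mono {A B D : C} {f : A ⟶ B} {g : B ⟶ D} (h : IsSES f g) : Mono f :=
  h.choose_spec.mono_f

lemma IsSES.epi {A B D : C} {f : A ⟶ B} {g : B ⟶ D} (h : IsSES f g) : Epi g :=
  h.choose_spec.epi_g

lemma IsSES.zero {A B D : C} {f : A ⟶ B} {g : B ⟶ D} (h : IsSES f g) : f ≫ g = 0 :=
  h.choose

lemma IsSES.lift {A B D : C} {f : A ⟶ B} {g : B ⟶ D} (h : IsSES f g) {T : C} (k : T ⟶ B)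
    (hk : k ≫ g = 0) : ∃ l : T ⟶ A, l ≫ f = k := by
  obtain ⟨w, hw⟩ := h
  have := hw.mono_f
  exact ⟨hw.exact.lift k hk, hw.exact.lift_f k hk⟩

lemma IsSES.desc {A B D : C} {f : A ⟶ B} {g : B ⟶ D} (h : IsSES f g) {T : C} (k : B ⟶ T)
    (hk : f ≫ k = 0) : ∃ l : D ⟶ T, g ≫ l = k := by
  obtain ⟨w, hw⟩ := h
  have := hw.epi_g
  exact ⟨hw.exact.desc k hk, hw.exact.g_desc k hk⟩

lemma IsSES.mk' {A B D : C} {f : A ⟶ B} {g : B ⟶ D} (w : f ≫ g = 0) (hf : Mono f) (hg : Epi g)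
    (hl : ∀ {T : C} (k : T ⟶ B), k ≫ g = 0 → ∃ l : T ⟶ A, l ≫ f = k) : IsSES f g := by
  refine ⟨w, ?_⟩
  have : Mono (ShortComplex.mk f g w).f := hf
  have : Epi (ShortComplex.mk f g w).g := hg
  refine { exact := ?_ }
  apply ShortComplex.exact_of_f_is_kernel
  exact KernelFork.IsLimit.ofι' _ _ (fun k hk => ⟨(hl k hk).choose, (hl k hk).choose_spec⟩)

lemma IsSES.kernel {B D : C} (g : B ⟶ D) [Epi g] : IsSES (kernel.ι g) g :=
  IsSES.mk' (kernel.condition g) inferInstance inferInstance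
    (fun k hk => ⟨kernel.lift g k hk, kernel.lift_ι _ _ _⟩)

lemma IsSES.zero_left (M : C) : IsSES (0 : (0 : C) ⟶ M) (𝟙 M) :=
  IsSES.mk' (by simp) ⟨fun _ _ _ => (isZero_zero C).eq_of_tgt _ _⟩ inferInstance
    (fun k hk => ⟨0, by simpa using hk.symm⟩)

lemma IsSES.zero_right (M : C) : IsSES (𝟙 M) (0 : M ⟶ (0 : C)) :=
  IsSES.mk' (by simp) inferInstance ⟨fun _ _ _ => (isZero_zero C).eq_of_src _ _⟩
    (fun k _ => ⟨k, by simp⟩)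

lemma IsSES.biprod (A B : C) : IsSES (biprod.inl : A ⟶ A ⊞ B) biprod.snd :=
  IsSES.mk' (by simp) inferInstance inferInstance
    (fun k hk => ⟨k ≫ biprod.fst, by ext <;> simp [hk]⟩)

/-- The pullback of a short exact sequence along a morphism to its right end. -/
lemma IsSES.pullback_right {A B D E : C} {f : A ⟶ B} {g : B ⟶ D} (h : IsSES f g) (e : E ⟶ D) :
    ∃ i : A ⟶ pullback g e, IsSES i (pullback.snd g e) ∧ i ≫ pullback.fst g e = f := by
  have := h.epi
  have := h.mono
  have hi : pullback.lift f 0 (by simp [h.zero]) ≫ pullback.fst g e = f := pullback.lift_fst _ _ _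
  have hi' : pullback.lift f 0 (by simp [h.zero]) ≫ pullback.snd g e = 0 := pullback.lift_snd _ _ _
  refine ⟨pullback.lift f 0 (by simp [h.zero]), IsSES.mk' hi' ?_ inferInstance ?_, hi⟩
  · exact @mono_of_mono _ _ _ _ _ _ (pullback.fst g e) (by rw [hi]; exact h.mono)
  · intro T k hk
    obtain ⟨l, hl⟩ := h.lift (k ≫ pullback.fst g e) (by
      rw [Category.assoc, pullback.condition, reassoc_of% hk, zero_comp])
    refine ⟨l, pullback.hom_ext ?_ ?_⟩
    · rw [Category.assoc, hi, hl]
    · rw [Category.assoc, hi', hk, comp_zero]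

/-- Two short exact sequences with the same right end: their pullback is an extension in
two ways. -/
lemma IsSES.pullback_both {A B D K E : C} {f : A ⟶ B} {g : B ⟶ D} {k : K ⟶ E} {e : E ⟶ D}
    (h : IsSES f g) (h' : IsSES k e) :
    ∃ (P : C) (i : A ⟶ P) (q : P ⟶ E) (j : K ⟶ P) (r : P ⟶ B), IsSES i q ∧ IsSES j r := by
  obtain ⟨i, hi, -⟩ := h.pullback_right e
  obtain ⟨j, hj, -⟩ := h'.pullback_right g
  refine ⟨_, i, _, j ≫ (pullbackSymmetry e g).hom, pullback.fst g e, hi, ?_⟩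
  have := hj.mono
  have := hj.epi
  have := h'.epi
  refine IsSES.mk' ?_ inferInstance inferInstance ?_
  · simp [hj.zero]
  · intro T l hl
    obtain ⟨m, hm⟩ := hj.lift (l ≫ (pullbackSymmetry e g).inv) (by simp [hl])
    exact ⟨m, by rw [reassoc_of% hm]; simp⟩

/-- The kernel of a composite `E ⟶ B ⟶ D` of epimorphisms is an extension of the kernels. -/
lemma IsSES.comp_epi {A B D K E : C} {f : A ⟶ B} {g : B ⟶ D} {k : K ⟶ E} {e : E ⟶ B}
    (h : IsSES f g) (h' : IsSES k e) :
    ∃ (Q : C) (i : K ⟶ Q) (q : Q ⟶ A) (j : Q ⟶ E), IsSES i q ∧ IsSES j (e ≫ g) := by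
  obtain ⟨i, hi, -⟩ := h'.pullback_right f
  have := h.mono
  have := h.epi
  have := h'.epi
  refine ⟨_, i, _, pullback.fst e f, hi, IsSES.mk' ?_ inferInstance inferInstance ?_⟩
  · rw [pullback.condition_assoc, h.zero, comp_zero]
  · intro T l hl
    obtain ⟨m, hm⟩ := h.lift (l ≫ e) (by simpa using hl)
    exact ⟨pullback.lift l m hm.symm, pullback.lift_fst _ _ _⟩

end SES

/-! ### Vanishing of `Ext` on the hat class -/

lemma exists_section {A P W₀ : C} {i : A ⟶ P} {q : P ⟶ W₀} (h : IsSES i q)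
    (hE : Subsingleton (Abelian.Ext W₀ A 1)) : ∃ s : W₀ ⟶ P, s ≫ q = 𝟙 W₀ := by
  obtain ⟨w, hw⟩ := h
  obtain ⟨x, hx⟩ := Ext.covariant_sequence_exact₃ W₀ hw (Ext.mk₀ (𝟙 W₀)) (zero_add 1)
    (Subsingleton.elim _ _)
  obtain ⟨s, rfl⟩ := Ext.homEquiv₀.symm.surjective x
  refine ⟨s, ?_⟩
  apply Ext.homEquiv₀.symm.injective
  simpa using hx

lemma ext_hat {X W : C → Prop} (hF : StrongLeftFrobenius X W) {W₀ : C} (hW : W W₀) (n : ℕ) :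
    ∀ {M : C}, Hat X n M → ∀ i, 1 ≤ i → Subsingleton (Abelian.Ext W₀ M i) := by
  induction n with
  | zero => intro M hM i hi; exact hF.proj _ _ hW hM i hi
  | succ n ih =>
    rintro M ⟨K, E, f, g, ⟨w, hw⟩, hE, hK⟩ i hi
    have h1 : Subsingleton (Abelian.Ext W₀ E i) := hF.proj _ _ hW hE i hi
    have h2 : Subsingleton (Abelian.Ext W₀ K (i + 1)) := ih hK _ (by omega)
    refine subsingleton_of_forall_eq 0 fun x => ?_
    obtain ⟨y, rfl⟩ := Ext.covariant_sequence_exact₃ W₀ hw x rfl (h2.elim _ _)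
    rw [h1.elim y 0, Ext.zero_comp]

/-! ### Closure properties of the hat class -/

lemma hat_mono {X W : C → Prop} (hF : StrongLeftFrobenius X W) {n m : ℕ} (hnm : n ≤ m) :
    ∀ {M : C}, Hat X n M → Hat X m M := by
  have hX : ∀ (m : ℕ) {M : C}, X M → Hat X m M := by
    intro m
    induction m with
    | zero => exact fun h => h
    | succ m ih => exact fun h => ⟨_, _, _, _, IsSES.zero_left _, h, ih hF.subX.zero⟩
  induction n generalizing m with
  | zero => exact fun {_} h => hX m h
  | succ n ih =>
    obtain ⟨m, rfl⟩ : ∃ k, m = k + 1 := ⟨m - 1, by omega⟩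
    rintro M ⟨K, E, f, g, h, hE, hK⟩
    exact ⟨K, E, f, g, h, hE, ih (by omega) hK⟩

/-- The special case of closure under extensions (`hat_ext`) with left end in `X`; it needs no
covers by `W`, so it is available for constructing them. -/
lemma hat_ext_of_left {X W : C → Prop} (hF : StrongLeftFrobenius X W) (n : ℕ) {A B D : C}
    {f : A ⟶ B} {g : B ⟶ D} (h : IsSES f g) (hA : X A) (hD : Hat X n D) : Hat X n B := by
  cases n with
  | zero => exact hF.extClosed _ _ h hA hD
  | succ n =>
    obtain ⟨K, E, k, e, h', hE, hK⟩ := hD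
    obtain ⟨P, i, q, j, r, h1, h2⟩ := h.pullback_both h'
    exact ⟨K, P, j, r, h2, hF.extClosed _ _ h1 hA hE, hK⟩

/-- Objects of the hat class are covered by `W`, with kernel of smaller resolution dimension. -/
lemma exists_res {X W : C → Prop} (hF : StrongLeftFrobenius X W) (n : ℕ) {M : C}
    (hM : Hat X (n + 1) M) :
    ∃ (Z W₀ : C) (f : Z ⟶ W₀) (g : W₀ ⟶ M), IsSES f g ∧ W W₀ ∧ Hat X n Z := by
  obtain ⟨K, E, k, e, h, hE, hK⟩ := hM
  obtain ⟨X', W₀, f, g, h', hW, hX'⟩ := hF.gen.2 E hE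
  obtain ⟨Q, i, q, j, h1, h2⟩ := h.comp_epi h'
  exact ⟨Q, W₀, j, _, h2, hW, hat_ext_of_left hF n h1 hX' hK⟩

/-- The special case of closure under kernels of epimorphisms (`hatAll_ker`) with right end
in `X`, preserving the resolution dimension. -/
lemma hat_ker_of_right {X W : C → Prop} (hF : StrongLeftFrobenius X W) (n : ℕ) {A B D : C}
    {f : A ⟶ B} {g : B ⟶ D} (h : IsSES f g) (hB : Hat X n B) (hD : X D) : Hat X n A := by
  cases n with
  | zero => exact hF.kerEpiClosed _ _ h hB hD
  | succ n =>
    obtain ⟨K, E, k, e, h', hE, hK⟩ := hB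
    obtain ⟨Q, i, q, j, h1, h2⟩ := h.comp_epi h'
    exact ⟨K, Q, i, q, h1, hF.kerEpiClosed _ _ h2 hE hD, hK⟩

/-- If `P` is a split extension of `W₀` by `A`, a cover `E` of `A` gives a cover `E ⊞ W₀` of `P`
with the same kernel. -/
lemma cover_of_split {A P W₀ K E : C} {i : A ⟶ P} {q : P ⟶ W₀} {k : K ⟶ E} {e : E ⟶ A}
    (h : IsSES i q) (h' : IsSES k e) (s : W₀ ⟶ P) (hs : s ≫ q = 𝟙 W₀) :
    IsSES (k ≫ biprod.inl) (biprod.desc (e ≫ i) s) := by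
  have := h.mono
  have := h.epi
  have := h'.mono
  have := h'.epi
  refine IsSES.mk' ?_ inferInstance ?_ ?_
  · simp [reassoc_of% h'.zero]
  · apply Preadditive.epi_of_cancel_zero
    intro T u hu
    have h1 : i ≫ u = 0 := by
      have := biprod.inl ≫= hu
      rw [← cancel_epi e]
      simpa using this
    have h2 : s ≫ u = 0 := by simpa using biprod.inr ≫= hu
    obtain ⟨v, rfl⟩ := h.desc u h1
    rw [reassoc_of% hs] at h2
    rw [h2, comp_zero]
  · intro T l hl
    have hl' : l ≫ biprod.fst ≫ e ≫ i + l ≫ biprod.snd ≫ s = 0 := by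
      rw [← hl, biprod.desc_eq]; simp
    have h2 : l ≫ biprod.snd = 0 := by
      have := hl' =≫ q
      simpa [h.zero, hs] using this
    have h1 : (l ≫ biprod.fst) ≫ e = 0 := by
      rw [reassoc_of% h2, zero_comp, add_zero] at hl'
      rw [← cancel_mono i]
      simpa using hl'
    obtain ⟨m, hm⟩ := h'.lift _ h1
    refine ⟨m, ?_⟩
    ext
    · simp [hm]
    · simp [h2]

lemma hat_ext {X W : C → Prop} (hF : StrongLeftFrobenius X W) (n : ℕ) :
    ∀ {A B D : C} {f : A ⟶ B} {g : B ⟶ D}, IsSES f g → Hat X n A → Hat X n D → Hat X n B := by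
  induction n with
  | zero => intro A B D f g h hA hD; exact hF.extClosed _ _ h hA hD
  | succ n ih =>
    intro A B D f g h hA hD
    obtain ⟨D', W₀, d, p, h', hW, hD'⟩ := exists_res hF n hD
    obtain ⟨P, i, q, j, r, h1, h2⟩ := h.pullback_both h'
    obtain ⟨s, hs⟩ := exists_section h1 (ext_hat hF hW _ hA 1 le_rfl)
    obtain ⟨A', E, k, e, h3, hE, hA'⟩ := hA
    obtain ⟨Q, i', q', j', h4, h5⟩ := h2.comp_epi (cover_of_split h1 h3 s hs)
    exact ⟨Q, _, j', _, h5, hF.subX.biprod_closed hE (hF.gen.1 _ hW), ih h4 hA' hD'⟩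

/-- The kernel of any epimorphism from an object of `X` onto an object of `X̂ₙ₊₁` is in `X̂ₙ`. -/
lemma hat_syzygy {X W : C → Prop} (hF : StrongLeftFrobenius X W) (n : ℕ) {Z E M : C}
    {f : Z ⟶ E} {g : E ⟶ M} (h : IsSES f g) (hE : X E) (hM : Hat X (n + 1) M) : Hat X n Z := by
  obtain ⟨Z', W₀, k, e, h', hW, hZ'⟩ := exists_res hF n hM
  obtain ⟨P, i, q, j, r, h1, h2⟩ := h.pullback_both h'
  exact hat_ker_of_right hF n h1 (hat_ext hF n h2 hZ' (hat_mono hF (Nat.zero_le n) hE))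
    (hF.gen.1 _ hW)

lemma hat_summand {X W : C → Prop} (hF : StrongLeftFrobenius X W) (n : ℕ) :
    ∀ {A M : C} (i : A ⟶ M) (p : M ⟶ A), i ≫ p = 𝟙 A → Hat X n M → Hat X n A := by
  induction n with
  | zero => intro A M i p hip hM; exact hF.subX.summand_closed i p hip hM
  | succ n ih =>
    intro A M i p hip hM
    obtain ⟨Z, W₀, f, π, h, hW, hZ⟩ := exists_res hF n hM
    have := h.epi
    have : Epi p := (IsSplitEpi.mk' ⟨i, hip⟩ : IsSplitEpi p).epi
    -- On elements, `(x, y) ↦ i p π x + (1 - i p) π y`; it is onto, and its kernel contains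
    -- the kernel of `π ≫ p` as a retract via the first coordinate.
    let φ : W₀ ⊞ W₀ ⟶ M := biprod.desc (π ≫ p ≫ i) (π ≫ (𝟙 M - p ≫ i))
    have hφp : φ ≫ p = biprod.fst ≫ π ≫ p := by
      ext <;> simp [φ, hip, Preadditive.sub_comp]
    have hφ : Epi φ := by
      apply Preadditive.epi_of_cancel_zero
      intro T u hu
      have h1 : π ≫ p ≫ i ≫ u = 0 := by simpa [φ] using biprod.inl ≫= hu
      have h2 : π ≫ (𝟙 M - p ≫ i) ≫ u = 0 := by simpa [φ] using biprod.inr ≫= hu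
      rw [← cancel_epi π]
      simpa [Preadditive.sub_comp, h1] using h2
    have hX := hF.gen.1 _ hW
    have hN : Hat X n (kernel φ) :=
      hat_syzygy hF n (IsSES.kernel φ) (hF.subX.biprod_closed hX hX) hM
    refine ⟨kernel (π ≫ p), W₀, kernel.ι _, π ≫ p, IsSES.kernel _, hX, ?_⟩
    refine ih (kernel.lift φ (kernel.ι (π ≫ p) ≫ biprod.inl) ?_)
      (kernel.lift (π ≫ p) (kernel.ι φ ≫ biprod.fst) ?_) ?_ hN
    · have := kernel.condition (π ≫ p)
      simp [φ, reassoc_of% this]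
    · rw [Category.assoc, ← hφp, kernel.condition_assoc, zero_comp]
    · rw [← cancel_mono (kernel.ι (π ≫ p))]
      simp

lemma hatAll_ext {X W : C → Prop} (hF : StrongLeftFrobenius X W) {A B D : C}
    {f : A ⟶ B} {g : B ⟶ D} (h : IsSES f g) (hA : HatAll X A) (hD : HatAll X D) :
    HatAll X B := by
  obtain ⟨n, hA⟩ := hA
  obtain ⟨m, hD⟩ := hD
  exact ⟨max n m, hat_ext hF _ h (hat_mono hF (le_max_left _ _) hA)
    (hat_mono hF (le_max_right _ _) hD)⟩

lemma hatAll_coker {X W : C → Prop} (hF : StrongLeftFrobenius X W) {A B D : C}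
    {f : A ⟶ B} {g : B ⟶ D} (h : IsSES f g) (hA : HatAll X A) (hB : HatAll X B) :
    HatAll X D := by
  obtain ⟨n, hB⟩ := hB
  obtain ⟨K, E, k, e, h', hE, hK⟩ := hat_mono hF (Nat.le_succ n) hB
  obtain ⟨Q, i, q, j, h1, h2⟩ := h.comp_epi h'
  obtain ⟨m, hQ⟩ := hatAll_ext hF h1 ⟨n, hK⟩ hA
  exact ⟨m + 1, Q, E, j, _, h2, hE, hQ⟩

lemma hatAll_ker {X W : C → Prop} (hF : StrongLeftFrobenius X W) {A B D : C}
    {f : A ⟶ B} {g : B ⟶ D} (h : IsSES f g) (hB : HatAll X B) (hD : HatAll X D) :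
    HatAll X A := by
  obtain ⟨n, hD⟩ := hD
  obtain ⟨K, E, k, e, h', hE, hK⟩ := hat_mono hF (Nat.le_succ n) hD
  obtain ⟨P, i, q, j, r, h1, h2⟩ := h.pullback_both h'
  obtain ⟨m, hP⟩ := hatAll_ext hF h2 ⟨n, hK⟩ hB
  exact ⟨m, hat_ker_of_right hF m h1 hP hE⟩

lemma hatAll_summand {X W : C → Prop} (hF : StrongLeftFrobenius X W) {A M : C}
    (i : A ⟶ M) (p : M ⟶ A) (hip : i ≫ p = 𝟙 A) (hM : HatAll X M) : HatAll X A :=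
  hM.imp fun n hn => hat_summand hF n i p hip hn

lemma hatAll_thick {X W : C → Prop} (hF : StrongLeftFrobenius X W) : IsThickSub (HatAll X) :=
  ⟨{ zero := ⟨0, hF.subX.zero⟩
     iso_closed := fun e h => hatAll_summand hF e.inv e.hom e.inv_hom_id h
     biprod_closed := fun hA hB => hatAll_ext hF (IsSES.biprod _ _) hA hB
     summand_closed := hatAll_summand hF },
   fun _ _ _ _ _ h => ⟨hatAll_coker hF h, hatAll_ext hF h, hatAll_ker hF h⟩⟩

lemma hat_subset_thick {X T : C → Prop} (hT : IsThickSub T) (hX : ∀ N, X N → T N) (n : ℕ) :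
    ∀ {M : C}, Hat X n M → T M := by
  induction n with
  | zero => exact fun h => hX _ h
  | succ n ih =>
    rintro M ⟨K, E, k, e, h, hE, hK⟩
    exact (hT.2 k e h).1 (ih hK) (hX _ hE)

/-- For a strong left Frobenius pair `(X, W)`, `(W, X̂)` is a cotorsion pair
on the extension-closed subcategory `Thick(X) = X̂` of `C`. -/
theorem statement12 {C : Type u} [Category.{v} C] [Abelian C]
    [EnoughProjectives C] [EnoughInjectives C] [HasExt.{w} C]
    (X W : C → Prop) (hF : StrongLeftFrobenius X W) :
    CotorsionPairOn (HatAll X) W (HatAll X) ∧ (∀ M, thickClosure X M ↔ HatAll X M) := by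
  refine ⟨?_, fun M => ⟨fun h => h _ (hatAll_thick hF) fun N hN => ⟨0, hN⟩, ?_⟩⟩
  · exact
      { subU := fun M hM => ⟨0, hF.gen.1 M hM⟩
        subV := fun _ hM => hM
        isoU := hF.subW.iso_closed
        summandU := hF.subW.summand_closed
        isoV := (hatAll_thick hF).1.iso_closed
        summandV := hatAll_summand hF
        ext1 := fun M N hM ⟨n, hN⟩ => ext_hat hF hM n hN 1 le_rfl
        res := fun M ⟨n, hM⟩ => by
          obtain ⟨Z, W₀, f, g, h, hW, hZ⟩ := exists_res hF n (hat_mono hF (Nat.le_succ n) hM)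
          exact ⟨Z, W₀, f, g, h, hW, n, hZ⟩
        cores := fun M hM => ⟨M, 0, 𝟙 M, 0, IsSES.zero_right M, hF.subW.zero, hM⟩ }
  · rintro ⟨n, hM⟩ T hT hX
    exact hat_subset_thick hT hX n hM

end FrobeniusPaper
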